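/- arXiv:math/0506046 — 5 statements merged into one kernel-verified Lean document; each statement's English description precedes it below -/
import Mathlib

section
/- Let F be a field of characteristic zero, n ≥ 2, and m = 2q an even integer with q ≥ 1. Inside M_{n,m}(F)^{(+)}, let A = osp(n,q) (with the n×n block in the even rows/columns and the m×m block in the odd rows/columns), and let B be the set of all (n+m)×(n+m) matrices X such that every entry of the n-th row of X is zero and X_{i,n−1} = X_{i,n} for every index i ≠ n. Then A and B are subsuperalgebras of M_{n,m}(F)^{(+)}, B is isomorphic as a superalgebra to M_{n−1,m}(F)^{(+)}, and A + B = M_{n,m}(F)^{(+)} (as vector spaces). -/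
open Matrix

namespace SJ

section SuperDefs

variable {F : Type*} [Field F] {J : Type*} [AddCommGroup J] [Module F J]

/-- A graded subspace: `A = (A ∩ J₀) ⊕ (A ∩ J₁)`. -/
def IsGradedG (ev od : Submodule F J) (A : Submodule F J) : Prop :=
  A = (A ⊓ ev) ⊔ (A ⊓ od)

/-- A subsuperalgebra: a graded subspace closed under the product. -/
def IsSubalgG (mul : J → J → J) (ev od : Submodule F J) (A : Submodule F J) : Prop :=
  IsGradedG ev od A ∧ ∀ x ∈ A, ∀ y ∈ A, mul x y ∈ A

/-- Nontrivial: `A ∩ J₁ ≠ {0}`. -/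
def NontrivG (od : Submodule F J) (A : Submodule F J) : Prop := A ⊓ od ≠ ⊥

/-- Simple: `A∘A ≠ 0` and the only graded subspaces `I ⊆ A` with `A∘I ⊆ I` are `0` and `A`. -/
def IsSimpleG (mul : J → J → J) (ev od : Submodule F J) (A : Submodule F J) : Prop :=
  (∃ x ∈ A, ∃ y ∈ A, mul x y ≠ 0) ∧
  ∀ I : Submodule F J, I ≤ A → IsGradedG ev od I →
    (∀ x ∈ A, ∀ y ∈ I, mul x y ∈ I) → I = ⊥ ∨ I = A

/-- An isomorphism of superalgebras: an F-linear bijection mapping even part onto even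
part, odd part onto odd part, and preserving the product. -/
def SuperIsoG {J₂ : Type*} [AddCommGroup J₂] [Module F J₂]
    (mul₁ : J → J → J) (ev₁ od₁ : Submodule F J)
    (mul₂ : J₂ → J₂ → J₂) (ev₂ od₂ : Submodule F J₂)
    (A : Submodule F J) (B : Submodule F J₂) : Prop :=
  ∃ e : A ≃ₗ[F] B,
    (∀ x : A, (x : J) ∈ ev₁ ↔ (e x : J₂) ∈ ev₂) ∧
    (∀ x : A, (x : J) ∈ od₁ ↔ (e x : J₂) ∈ od₂) ∧
    ∀ x y z : A, mul₁ x y = (z : J) → mul₂ (e x) (e y) = (e z : J₂)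

end SuperDefs

/-- The space of (n+m)×(n+m) matrices, indices split into even (`inl`) and odd (`inr`) ones. -/
abbrev MJ (F : Type*) [Field F] (n m : ℕ) :=
  Matrix (Fin n ⊕ Fin m) (Fin n ⊕ Fin m) F

/-- Parity of an index. -/
def pty {n m : ℕ} : Fin n ⊕ Fin m → Bool := Sum.elim (fun _ => false) (fun _ => true)

variable (F : Type*) [Field F]

/-- The odd component of a matrix (block-antidiagonal part). -/
def oddPart {n m : ℕ} (X : MJ F n m) : MJ F n m :=
  Matrix.of fun i j => if pty i = pty j then 0 else X i j

/-- The even component of a matrix (block-diagonal part). -/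
def evenPart {n m : ℕ} (X : MJ F n m) : MJ F n m :=
  Matrix.of fun i j => if pty i = pty j then X i j else 0

variable {F}

/-- The super-Jordan product on `M_{n,m}(F)^{(+)}`:  `x∘y = (xy+yx)/2` when `x` or `y` is
even and `x∘y = (xy−yx)/2` when both are odd, extended bilinearly.  (For arbitrary
matrices this bilinear extension equals `(xy+yx)/2 − y₁x₁` where `x₁, y₁` are the odd
components.) -/
def jmul {n m : ℕ} (X Y : MJ F n m) : MJ F n m :=
  (2 : F)⁻¹ • (X * Y + Y * X) - oddPart F Y * oddPart F X

variable (F)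

/-- The even part `J₀` of `M_{n,m}(F)^{(+)}`: block-diagonal matrices. -/
def evenSub (n m : ℕ) : Submodule F (MJ F n m) where
  carrier := {X | ∀ i j, pty i ≠ pty j → X i j = 0}
  zero_mem' := by intro i j _; simp
  add_mem' := by
    intro a b ha hb i j h
    simp only [Matrix.add_apply, ha i j h, hb i j h, add_zero]
  smul_mem' := by
    intro c a ha i j h
    simp only [Matrix.smul_apply, ha i j h, smul_zero]

/-- The odd part `J₁` of `M_{n,m}(F)^{(+)}`: block-antidiagonal matrices. -/
def oddSub (n m : ℕ) : Submodule F (MJ F n m) where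
  carrier := {X | ∀ i j, pty i = pty j → X i j = 0}
  zero_mem' := by intro i j _; simp
  add_mem' := by
    intro a b ha hb i j h
    simp only [Matrix.add_apply, ha i j h, hb i j h, add_zero]
  smul_mem' := by
    intro c a ha i j h
    simp only [Matrix.smul_apply, ha i j h, smul_zero]

/-- Statements about `M_{n,m}(F)^{(+)}` specialized from the generic definitions. -/
abbrev IsGraded {n m : ℕ} (A : Submodule F (MJ F n m)) : Prop :=
  IsGradedG (evenSub F n m) (oddSub F n m) A

abbrev IsSubalg {n m : ℕ} (A : Submodule F (MJ F n m)) : Prop :=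
  IsSubalgG jmul (evenSub F n m) (oddSub F n m) A

abbrev Nontriv {n m : ℕ} (A : Submodule F (MJ F n m)) : Prop :=
  NontrivG (oddSub F n m) A

abbrev IsSimple {n m : ℕ} (A : Submodule F (MJ F n m)) : Prop :=
  IsSimpleG jmul (evenSub F n m) (oddSub F n m) A

abbrev SuperIso {n₁ m₁ n₂ m₂ : ℕ}
    (A : Submodule F (MJ F n₁ m₁)) (B : Submodule F (MJ F n₂ m₂)) : Prop :=
  SuperIsoG jmul (evenSub F n₁ m₁) (oddSub F n₁ m₁)
    jmul (evenSub F n₂ m₂) (oddSub F n₂ m₂) A B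

/-- The standard symplectic matrix `S = [[0, I_q],[−I_q, 0]]` of size `2q`. -/
def SMat (q : ℕ) : Matrix (Fin (2 * q)) (Fin (2 * q)) F :=
  Matrix.of fun i j =>
    if (j : ℕ) = (i : ℕ) + q then (1 : F) else if (i : ℕ) = (j : ℕ) + q then -1 else 0

/-- `osp(p,q)`: block matrices `[[A, C],[S⁻¹Cᵀ, D]]` inside `M_{p,2q}(F)^{(+)}` with
`A` symmetric, `C` arbitrary and `Dᵀ S = S D`.  The condition on the lower-left block is
recorded in the equivalent form `S · C₂₁ = C₁₂ᵀ`. -/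
def ospSub (p q : ℕ) : Submodule F (MJ F p (2 * q)) where
  carrier := {X | (X.toBlocks₁₁)ᵀ = X.toBlocks₁₁ ∧
    SMat F q * X.toBlocks₂₁ = (X.toBlocks₁₂)ᵀ ∧
    (X.toBlocks₂₂)ᵀ * SMat F q = SMat F q * X.toBlocks₂₂}
  zero_mem' := by
    refine ⟨?_, ?_, ?_⟩ <;> ext i j <;>
      simp [Matrix.toBlocks₁₁, Matrix.toBlocks₁₂, Matrix.toBlocks₂₁, Matrix.toBlocks₂₂,
        Matrix.mul_apply]
  add_mem' := by
    rintro a b ⟨ha1, ha2, ha3⟩ ⟨hb1, hb2, hb3⟩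
    have e11 : (a + b).toBlocks₁₁ = a.toBlocks₁₁ + b.toBlocks₁₁ := rfl
    have e12 : (a + b).toBlocks₁₂ = a.toBlocks₁₂ + b.toBlocks₁₂ := rfl
    have e21 : (a + b).toBlocks₂₁ = a.toBlocks₂₁ + b.toBlocks₂₁ := rfl
    have e22 : (a + b).toBlocks₂₂ = a.toBlocks₂₂ + b.toBlocks₂₂ := rfl
    refine ⟨?_, ?_, ?_⟩
    · rw [e11, Matrix.transpose_add, ha1, hb1]
    · rw [e21, e12, Matrix.mul_add, Matrix.transpose_add, ha2, hb2]
    · rw [e22, Matrix.transpose_add, Matrix.add_mul, Matrix.mul_add, ha3, hb3]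
  smul_mem' := by
    rintro c a ⟨ha1, ha2, ha3⟩
    have e11 : (c • a).toBlocks₁₁ = c • a.toBlocks₁₁ := rfl
    have e12 : (c • a).toBlocks₁₂ = c • a.toBlocks₁₂ := rfl
    have e21 : (c • a).toBlocks₂₁ = c • a.toBlocks₂₁ := rfl
    have e22 : (c • a).toBlocks₂₂ = c • a.toBlocks₂₂ := rfl
    refine ⟨?_, ?_, ?_⟩
    · rw [e11, Matrix.transpose_smul, ha1]
    · rw [e21, e12, Matrix.mul_smul, Matrix.transpose_smul, ha2]
    · rw [e22, Matrix.transpose_smul, Matrix.smul_mul, Matrix.mul_smul, ha3]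

/-- `Q(n)`: matrices `[[A, B],[B, A]]` inside `M_{n,n}(F)^{(+)}`. -/
def QSub (n : ℕ) : Submodule F (MJ F n n) where
  carrier := {X | (∀ i j, X (Sum.inr i) (Sum.inr j) = X (Sum.inl i) (Sum.inl j)) ∧
    (∀ i j, X (Sum.inr i) (Sum.inl j) = X (Sum.inl i) (Sum.inr j))}
  zero_mem' := by constructor <;> intro i j <;> simp
  add_mem' := by
    rintro a b ⟨ha1, ha2⟩ ⟨hb1, hb2⟩
    constructor <;> intro i j <;>
      simp only [Matrix.add_apply, ha1 i j, ha2 i j, hb1 i j, hb2 i j]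
  smul_mem' := by
    rintro c a ⟨ha1, ha2⟩
    constructor <;> intro i j <;>
      simp only [Matrix.smul_apply, ha1 i j, ha2 i j]

/-- `P(n)`: matrices `[[A, B],[C, Aᵀ]]` with `B` symmetric and `C` skew-symmetric,
inside `M_{n,n}(F)^{(+)}`. -/
def PSub (n : ℕ) : Submodule F (MJ F n n) where
  carrier := {X | (∀ i j, X (Sum.inr i) (Sum.inr j) = X (Sum.inl j) (Sum.inl i)) ∧
    (∀ i j, X (Sum.inl i) (Sum.inr j) = X (Sum.inl j) (Sum.inr i)) ∧
    (∀ i j, X (Sum.inr i) (Sum.inl j) = - X (Sum.inr j) (Sum.inl i))}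
  zero_mem' := by refine ⟨?_, ?_, ?_⟩ <;> intro i j <;> simp
  add_mem' := by
    rintro a b ⟨ha1, ha2, ha3⟩ ⟨hb1, hb2, hb3⟩
    refine ⟨?_, ?_, ?_⟩ <;> intro i j <;>
      simp only [Matrix.add_apply, ha1 i j, ha2 i j, ha3 i j, hb1 i j, hb2 i j, hb3 i j] <;>
      ring
  smul_mem' := by
    rintro c a ⟨ha1, ha2, ha3⟩
    refine ⟨?_, ?_, ?_⟩ <;> intro i j <;>
      simp only [Matrix.smul_apply, ha1 i j, ha2 i j, ha3 i j, smul_neg]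

/-!
`osp(n,q)` is the fixed space of the orthosymplectic superinvolution `θ`, and for fixed `x`, `y`
the product `x ∘ y` is `(xy + θ(xy)) / 2`, which is again fixed.

`B` is the image of `M_{n-1,m}(F)` under `Y ↦ E Y R`, where `E` is the inclusion of the coordinate
space omitting the `n`-th basis vector and `R` is its left inverse sending `eₙ` to `eₙ₋₁`; since
`R E = 1`, this map is an injective homomorphism.

For the sum, `osp(n,q)` contains an element with the same `n`-th row and the same difference of
columns `n-1` and `n` as a given matrix: the `n`-th row determines the `n`-th column by
`θ`-symmetry, the difference then determines column `n-1`, and the two columns are compatible.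
-/

section Grading

variable {F} {n m : ℕ}

lemma evenPart_add_oddPart (X : MJ F n m) : evenPart F X + oddPart F X = X := by
  ext i j
  by_cases h : pty i = pty j <;> simp [evenPart, oddPart, h]

lemma evenPart_mem_evenSub (X : MJ F n m) : evenPart F X ∈ evenSub F n m :=
  fun _ _ h => if_neg h

lemma oddPart_mem_oddSub (X : MJ F n m) : oddPart F X ∈ oddSub F n m :=
  fun _ _ h => if_pos h

lemma mem_evenSub_iff_oddPart_eq_zero {X : MJ F n m} :
    X ∈ evenSub F n m ↔ oddPart F X = 0 := by
  change (∀ i j, pty i ≠ pty j → X i j = 0) ↔ _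
  simp [← Matrix.ext_iff, oddPart]

lemma mem_oddSub_iff_oddPart_eq_self {X : MJ F n m} :
    X ∈ oddSub F n m ↔ oddPart F X = X := by
  change (∀ i j, pty i = pty j → X i j = 0) ↔ _
  simp [← Matrix.ext_iff, oddPart, eq_comm]

lemma oddPart_fromBlocks (A : Matrix (Fin n) (Fin n) F) (C : Matrix (Fin n) (Fin m) F)
    (E : Matrix (Fin m) (Fin n) F) (D : Matrix (Fin m) (Fin m) F) :
    oddPart F (fromBlocks A C E D) = fromBlocks 0 C E 0 := by
  ext (i | i) (j | j) <;> simp [oddPart, pty]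

lemma isGraded_of_oddPart_mem {A : Submodule F (MJ F n m)}
    (hA : ∀ X ∈ A, oddPart F X ∈ A) : IsGraded F A := by
  refine le_antisymm (fun X hX => ?_) (sup_le inf_le_left inf_le_left)
  have hodd : oddPart F X ∈ A := hA X hX
  have heven : evenPart F X ∈ A := by
    rw [eq_sub_of_add_eq (evenPart_add_oddPart X)]
    exact A.sub_mem hX hodd
  rw [← evenPart_add_oddPart X]
  exact Submodule.add_mem_sup ⟨heven, evenPart_mem_evenSub X⟩ ⟨hodd, oddPart_mem_oddSub X⟩

end Grading

section SuperHom

variable {F} {k l n m : ℕ}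

/-- A homomorphism of associative superalgebras `M_{k,l}(F) → M_{n,m}(F)`, not required to be
unital. Preservation of the grading is expressed by commutation with the projection onto the odd
part. -/
structure IsSuperHom (φ : MJ F k l →ₗ[F] MJ F n m) : Prop where
  map_oddPart : ∀ X, φ (oddPart F X) = oddPart F (φ X)
  map_mul : ∀ X Y, φ (X * Y) = φ X * φ Y

namespace IsSuperHom

variable {φ : MJ F k l →ₗ[F] MJ F n m}

lemma map_jmul (hφ : IsSuperHom φ) (X Y : MJ F k l) : φ (jmul X Y) = jmul (φ X) (φ Y) := by
  simp only [jmul, map_sub, map_smul, map_add, hφ.map_mul, hφ.map_oddPart]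

lemma isSubalg_range (hφ : IsSuperHom φ) : IsSubalg F (LinearMap.range φ) := by
  refine ⟨isGraded_of_oddPart_mem ?_, ?_⟩
  · rintro _ ⟨X, rfl⟩
    exact ⟨oddPart F X, hφ.map_oddPart X⟩
  · rintro _ ⟨X, rfl⟩ _ ⟨Y, rfl⟩
    exact ⟨jmul X Y, hφ.map_jmul X Y⟩

lemma map_mem_evenSub_iff (hφ : IsSuperHom φ) (hinj : Function.Injective φ) {X : MJ F k l} :
    φ X ∈ evenSub F n m ↔ X ∈ evenSub F k l := by
  rw [mem_evenSub_iff_oddPart_eq_zero, mem_evenSub_iff_oddPart_eq_zero, ← hφ.map_oddPart,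
    map_eq_zero_iff φ hinj]

lemma map_mem_oddSub_iff (hφ : IsSuperHom φ) (hinj : Function.Injective φ) {X : MJ F k l} :
    φ X ∈ oddSub F n m ↔ X ∈ oddSub F k l := by
  rw [mem_oddSub_iff_oddPart_eq_self, mem_oddSub_iff_oddPart_eq_self, ← hφ.map_oddPart,
    hinj.eq_iff]

lemma superIso_range_top (hφ : IsSuperHom φ) (hinj : Function.Injective φ) :
    SuperIso F (LinearMap.range φ) (⊤ : Submodule F (MJ F k l)) := by
  let e : LinearMap.range φ ≃ₗ[F] (⊤ : Submodule F (MJ F k l)) :=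
    (LinearEquiv.ofInjective φ hinj).symm ≪≫ₗ Submodule.topEquiv.symm
  have map_e : ∀ X : LinearMap.range φ, φ (e X) = X := fun X =>
    congrArg Subtype.val ((LinearEquiv.ofInjective φ hinj).apply_symm_apply X)
  refine ⟨e, fun X => ?_, fun X => ?_, fun X Y Z hXY => hinj ?_⟩
  · rw [← map_e X, hφ.map_mem_evenSub_iff hinj]
  · rw [← map_e X, hφ.map_mem_oddSub_iff hinj]
  · rw [hφ.map_jmul, map_e, map_e, map_e, hXY]

end IsSuperHom

end SuperHom

section Superinvolution

variable {F} {n m : ℕ}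

/-- A superinvolution of `M_{n,m}(F)`: an even involutive linear map with
`θ(xy) = (-1)^{|x||y|} θ(y) θ(x)` for homogeneous `x`, `y`. The sign rule is stated for arbitrary
matrices by correcting the product of the odd components. -/
structure IsSuperinvolution (θ : MJ F n m →ₗ[F] MJ F n m) : Prop where
  involutive : Function.Involutive θ
  map_oddPart : ∀ X, θ (oddPart F X) = oddPart F (θ X)
  map_mul : ∀ X Y,
    θ (X * Y) = θ Y * θ X - (2 : F) • (oddPart F (θ Y) * oddPart F (θ X))

lemma IsSuperinvolution.jmul_eq_of_fixed [NeZero (2 : F)] {θ : MJ F n m →ₗ[F] MJ F n m}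
    (hθ : IsSuperinvolution θ) {X Y : MJ F n m} (hX : θ X = X) (hY : θ Y = Y) :
    jmul X Y = (2 : F)⁻¹ • (X * Y + θ (X * Y)) := by
  rw [hθ.map_mul, hX, hY, ← add_sub_assoc, smul_sub, inv_smul_smul₀ two_ne_zero, jmul]

lemma IsSuperinvolution.isSubalg_eqLocus_id [NeZero (2 : F)] {θ : MJ F n m →ₗ[F] MJ F n m}
    (hθ : IsSuperinvolution θ) : IsSubalg F (LinearMap.eqLocus θ LinearMap.id) := by
  refine ⟨isGraded_of_oddPart_mem fun X (hX : θ X = X) => ?_,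
    fun X (hX : θ X = X) Y (hY : θ Y = Y) => ?_⟩
  · change θ (oddPart F X) = oddPart F X
    rw [hθ.map_oddPart, hX]
  · change θ (jmul X Y) = jmul X Y
    rw [hθ.jmul_eq_of_fixed hX hY, map_smul, map_add, hθ.involutive, add_comm]

end Superinvolution

section Orthosymplectic

variable {F} {p q : ℕ}

/-- The identification of `Fin (2 * q)` with its two halves, under which `S` becomes Mathlib's
`-J = [[0, 1], [-1, 0]]`. -/
def halvesEquiv (q : ℕ) : Fin q ⊕ Fin q ≃ Fin (2 * q) :=
  finSumFinEquiv.trans (finCongr (two_mul q).symm)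

lemma halvesEquiv_inl_val (i : Fin q) : (halvesEquiv q (Sum.inl i) : ℕ) = i := by
  simp [halvesEquiv]

lemma halvesEquiv_inr_val (i : Fin q) : (halvesEquiv q (Sum.inr i) : ℕ) = i + q := by
  simp [halvesEquiv]

lemma SMat_eq_reindex_neg_J (q : ℕ) :
    SMat F q = reindexAlgEquiv F F (halvesEquiv q) (-J (Fin q) F) := by
  rw [coe_reindexAlgEquiv, ← Equiv.symm_apply_eq, reindex_symm, reindex_apply]
  ext (i | i) (j | j) <;>
    simp only [SMat, J, Equiv.symm_symm, submatrix_apply, of_apply, halvesEquiv_inl_val,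
      halvesEquiv_inr_val, Matrix.neg_apply, fromBlocks_apply₁₁, fromBlocks_apply₁₂,
      fromBlocks_apply₂₁, fromBlocks_apply₂₂, Matrix.zero_apply, Matrix.one_apply,
      Fin.ext_iff] <;>
    grind

lemma SMat_transpose (q : ℕ) : (SMat F q)ᵀ = -SMat F q := by
  rw [SMat_eq_reindex_neg_J, ← map_neg, coe_reindexAlgEquiv, transpose_reindex, transpose_neg,
    J_transpose]

lemma SMat_mul_self (q : ℕ) : SMat F q * SMat F q = -1 := by
  rw [SMat_eq_reindex_neg_J, ← map_mul, neg_mul_neg, J_squared, map_neg, map_one]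

lemma SMat_mul_SMat_mul {ι : Type*} (M : Matrix (Fin (2 * q)) ι F) :
    SMat F q * (SMat F q * M) = -M := by
  rw [← Matrix.mul_assoc, SMat_mul_self, Matrix.neg_mul, Matrix.one_mul]

variable (F p q) in
/-- The orthosymplectic superinvolution `[[A, C], [E, D]] ↦ [[Aᵀ, (S E)ᵀ], [S⁻¹ Cᵀ, S⁻¹ Dᵀ S]]`,
written with `Sᵀ = S⁻¹ = -S`. -/
def ospInvolution : MJ F p (2 * q) →ₗ[F] MJ F p (2 * q) where
  toFun X := fromBlocks (X.toBlocks₁₁)ᵀ (-((X.toBlocks₂₁)ᵀ * SMat F q))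
    (-(SMat F q * (X.toBlocks₁₂)ᵀ)) (-(SMat F q * ((X.toBlocks₂₂)ᵀ * SMat F q)))
  map_add' X Y := by
    rw [← fromBlocks_toBlocks X, ← fromBlocks_toBlocks Y]
    simp [fromBlocks_add, Matrix.add_mul, Matrix.mul_add, add_comm]
  map_smul' c X := by
    rw [← fromBlocks_toBlocks X]
    simp [fromBlocks_smul]

lemma ospInvolution_fromBlocks (A : Matrix (Fin p) (Fin p) F)
    (C : Matrix (Fin p) (Fin (2 * q)) F) (E : Matrix (Fin (2 * q)) (Fin p) F)
    (D : Matrix (Fin (2 * q)) (Fin (2 * q)) F) :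
    ospInvolution F p q (fromBlocks A C E D) =
      fromBlocks Aᵀ (-(Eᵀ * SMat F q)) (-(SMat F q * Cᵀ)) (-(SMat F q * (Dᵀ * SMat F q))) := by
  simp [ospInvolution]

lemma isSuperinvolution_ospInvolution : IsSuperinvolution (ospInvolution F p q) where
  involutive X := by
    rw [← fromBlocks_toBlocks X]
    simp [ospInvolution_fromBlocks, SMat_transpose, Matrix.mul_assoc, SMat_mul_SMat_mul,
      SMat_mul_self]
  map_oddPart X := by
    rw [← fromBlocks_toBlocks X]
    simp [ospInvolution_fromBlocks, oddPart_fromBlocks]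
  map_mul X Y := by
    rw [← fromBlocks_toBlocks X, ← fromBlocks_toBlocks Y]
    simp only [fromBlocks_multiply, ospInvolution_fromBlocks, oddPart_fromBlocks, fromBlocks_smul,
      sub_eq_add_neg, fromBlocks_neg, fromBlocks_add, transpose_add, transpose_mul, Matrix.mul_add,
      Matrix.add_mul, Matrix.mul_neg, Matrix.neg_mul, Matrix.mul_assoc, SMat_mul_SMat_mul]
    congr 1 <;> simp only [Matrix.zero_mul, Matrix.mul_zero, add_zero, zero_add] <;> module

lemma fromBlocks_mem_ospSub_iff {A : Matrix (Fin p) (Fin p) F}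
    {C : Matrix (Fin p) (Fin (2 * q)) F} {E : Matrix (Fin (2 * q)) (Fin p) F}
    {D : Matrix (Fin (2 * q)) (Fin (2 * q)) F} :
    fromBlocks A C E D ∈ ospSub F p q ↔
      Aᵀ = A ∧ SMat F q * E = Cᵀ ∧ Dᵀ * SMat F q = SMat F q * D :=
  Iff.rfl

lemma SMat_mul_eq_iff {ι : Type*} {M N : Matrix (Fin (2 * q)) ι F} :
    SMat F q * M = N ↔ -(SMat F q * N) = M := by
  constructor <;> rintro rfl <;> simp [SMat_mul_SMat_mul]

lemma ospSub_eq_eqLocus_ospInvolution :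
    ospSub F p q = LinearMap.eqLocus (ospInvolution F p q) LinearMap.id := by
  ext X
  rw [← fromBlocks_toBlocks X, fromBlocks_mem_ospSub_iff, LinearMap.mem_eqLocus,
    ospInvolution_fromBlocks, LinearMap.id_apply, fromBlocks_inj]
  have hodd (C : Matrix (Fin p) (Fin (2 * q)) F) (E : Matrix (Fin (2 * q)) (Fin p) F) :
      -(Eᵀ * SMat F q) = C ↔ SMat F q * E = Cᵀ := by
    rw [← transpose_inj, transpose_neg, transpose_mul, SMat_transpose, transpose_transpose,
      Matrix.neg_mul, neg_neg]
  rw [hodd, ← SMat_mul_eq_iff, ← SMat_mul_eq_iff, eq_comm (a := SMat F q * _)]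
  tauto

lemma isSubalg_ospSub [NeZero (2 : F)] : IsSubalg F (ospSub F p q) := by
  rw [ospSub_eq_eqLocus_ospInvolution]
  exact isSuperinvolution_ospInvolution.isSubalg_eqLocus_id

lemma exists_isSymm_row_eq_row_eq {ι α : Type*} [Zero α] {a b : ι} (hab : a ≠ b)
    {r s : ι → α} (h : r b = s a) : ∃ A : Matrix ι ι α, A.IsSymm ∧ A a = r ∧ A b = s := by
  classical
  refine ⟨Matrix.of fun i j => if i = a then r j else if j = a then r i
    else if i = b then s j else if j = b then s i else 0, ?_, ?_, ?_⟩
  · ext i j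
    simp only [transpose_apply, of_apply]
    split_ifs <;> simp_all
  · ext j
    simp
  · ext j
    simp only [of_apply]
    split_ifs <;> simp_all

lemma exists_isSymm_row_eq_col_sub_col_eq {ι α : Type*} [AddCommGroup α]
    {a b : ι} (hab : a ≠ b) (X : Matrix ι ι α) :
    ∃ A : Matrix ι ι α, A.IsSymm ∧ A a = X a ∧ ∀ i, A i b - A i a = X i b - X i a := by
  obtain ⟨A, hA, hAa, hAb⟩ := exists_isSymm_row_eq_row_eq hab
    (r := X a) (s := fun i => X i b - X i a + X a i) (by simp)
  refine ⟨A, hA, hAa, fun i => ?_⟩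
  rw [← hA.apply i b, ← hA.apply i a, hAa, hAb, add_sub_cancel_right]

lemma exists_SMat_mul_col_eq_col_sub_col_eq (a : Fin p) (w : Fin (2 * q) → F)
    (E₀ : Matrix (Fin (2 * q)) (Fin p) F) :
    ∃ E : Matrix (Fin (2 * q)) (Fin p) F, (SMat F q * E).col a = w ∧
      ∀ i b, E i b - E i a = E₀ i b - E₀ i a := by
  -- Adding one vector to every column of `E₀` leaves the column differences unchanged.
  let E : Matrix (Fin (2 * q)) (Fin p) F :=
    Matrix.of fun i b => E₀ i b - E₀ i a - (SMat F q *ᵥ w) i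
  have hE_col : E.col a = -(SMat F q *ᵥ w) := by
    ext i
    simp [E]
  refine ⟨E, ?_, fun i b => by simp [E]⟩
  calc (SMat F q * E).col a = SMat F q *ᵥ E.col a := rfl
    _ = w := by rw [hE_col, mulVec_neg, mulVec_mulVec, SMat_mul_self, neg_mulVec, neg_neg,
      one_mulVec]

lemma exists_mem_ospSub_row_eq_col_sub_col_eq {a b : Fin p} (hab : a ≠ b) (X : MJ F p (2 * q)) :
    ∃ Z ∈ ospSub F p q, (∀ j, Z (Sum.inl a) j = X (Sum.inl a) j) ∧
      ∀ i, Z i (Sum.inl b) - Z i (Sum.inl a) = X i (Sum.inl b) - X i (Sum.inl a) := by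
  obtain ⟨A, hA, hA_row, hA_sub⟩ := exists_isSymm_row_eq_col_sub_col_eq hab X.toBlocks₁₁
  obtain ⟨E, hE_col, hE_sub⟩ :=
    exists_SMat_mul_col_eq_col_sub_col_eq a (X.toBlocks₁₂ a) X.toBlocks₂₁
  refine ⟨fromBlocks A (SMat F q * E)ᵀ E 0,
    fromBlocks_mem_ospSub_iff.2 ⟨hA, by simp, by simp⟩, ?_, ?_⟩
  · rintro (j | j)
    · exact congrFun hA_row j
    · exact congrFun hE_col j
  · rintro (i | i)
    · exact hA_sub i
    · exact hE_sub i b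

end Orthosymplectic

section BlockConj

variable {F} {k n m : ℕ} {E : Matrix (Fin n) (Fin k) F} {R : Matrix (Fin k) (Fin n) F}

variable (m E R) in
/-- The map `Y ↦ diag(E, 1) Y diag(R, 1)` from `M_{k,m}(F)` to `M_{n,m}(F)`, written blockwise.
It embeds `M_{k,m}(F)` as the corner of the idempotent `diag(E R, 1)` when `R E = 1`. -/
def blockConj : MJ F k m →ₗ[F] MJ F n m where
  toFun Y := fromBlocks (E * Y.toBlocks₁₁ * R) (E * Y.toBlocks₁₂) (Y.toBlocks₂₁ * R) Y.toBlocks₂₂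
  map_add' Y Z := by
    rw [← fromBlocks_toBlocks Y, ← fromBlocks_toBlocks Z]
    simp [fromBlocks_add, Matrix.add_mul, Matrix.mul_add]
  map_smul' c Y := by
    rw [← fromBlocks_toBlocks Y]
    simp [fromBlocks_smul]

lemma blockConj_fromBlocks (A : Matrix (Fin k) (Fin k) F) (C : Matrix (Fin k) (Fin m) F)
    (G : Matrix (Fin m) (Fin k) F) (D : Matrix (Fin m) (Fin m) F) :
    blockConj m E R (fromBlocks A C G D) = fromBlocks (E * A * R) (E * C) (G * R) D := by
  simp [blockConj]

lemma mul_mul_cancel_left_of_mul_eq_one {ι κ μ α : Type*} [Fintype ι] [Fintype κ]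
    [DecidableEq κ] [Semiring α] {R : Matrix κ ι α} {E : Matrix ι κ α} (hRE : R * E = 1)
    (M : Matrix κ μ α) : R * (E * M) = M := by
  rw [← Matrix.mul_assoc, hRE, Matrix.one_mul]

lemma leftInverse_blockConj (hRE : R * E = 1) :
    Function.LeftInverse (blockConj m R E) (blockConj m E R) := by
  intro Y
  rw [← fromBlocks_toBlocks Y]
  simp only [blockConj_fromBlocks, Matrix.mul_assoc, mul_mul_cancel_left_of_mul_eq_one hRE, hRE,
    Matrix.mul_one]

lemma isSuperHom_blockConj (hRE : R * E = 1) : IsSuperHom (blockConj m E R) where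
  map_oddPart X := by
    rw [← fromBlocks_toBlocks X]
    simp [blockConj_fromBlocks, oddPart_fromBlocks]
  map_mul X Y := by
    rw [← fromBlocks_toBlocks X, ← fromBlocks_toBlocks Y]
    simp only [blockConj_fromBlocks, fromBlocks_multiply, Matrix.mul_assoc, Matrix.mul_add,
      Matrix.add_mul, mul_mul_cancel_left_of_mul_eq_one hRE]

end BlockConj

section MergeEmbedding

variable {F} {n m : ℕ}

variable (F) in
/-- The matrix of the inclusion `F ^ n → F ^ (n + 1)` omitting the `a`-th coordinate. -/
def omitInclusion (a : Fin (n + 1)) : Matrix (Fin (n + 1)) (Fin n) F :=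
  (1 : Matrix (Fin (n + 1)) (Fin (n + 1)) F).submatrix id a.succAbove

variable (F) in
/-- The matrix of the retraction of `omitInclusion F a` that sends the basis vector `e_a` to the
`c`-th one. -/
def mergeRetraction (a : Fin (n + 1)) (c : Fin n) : Matrix (Fin n) (Fin (n + 1)) F :=
  (1 : Matrix (Fin n) (Fin n) F).submatrix id (a.insertNth c id : Fin (n + 1) → Fin n)

variable (F m) in
/-- The embedding of `M_{n,m}(F)` into `M_{n+1,m}(F)` whose image consists of the matrices with
zero `a`-th row and equal columns `a` and `a.succAbove c`. -/
def mergeEmbedding (a : Fin (n + 1)) (c : Fin n) : MJ F n m →ₗ[F] MJ F (n + 1) m :=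
  blockConj m (omitInclusion F a) (mergeRetraction F a c)

variable {a : Fin (n + 1)} {c : Fin n} {ι : Type*}

lemma mul_omitInclusion (M : Matrix ι (Fin (n + 1)) F) :
    M * omitInclusion F a = M.submatrix id a.succAbove :=
  mul_submatrix_one (Equiv.refl _) _ M

lemma mul_mergeRetraction (M : Matrix ι (Fin n) F) :
    M * mergeRetraction F a c = M.submatrix id (a.insertNth c id : Fin (n + 1) → Fin n) :=
  mul_submatrix_one (Equiv.refl _) _ M

lemma omitInclusion_mul_apply_self (M : Matrix (Fin n) ι F) (j : ι) :
    (omitInclusion F a * M) a j = 0 := by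
  simp [omitInclusion, Matrix.mul_apply]

lemma omitInclusion_mul_apply_succAbove (M : Matrix (Fin n) ι F) (i : Fin n) (j : ι) :
    (omitInclusion F a * M) (a.succAbove i) j = M i j := by
  simp [omitInclusion, Matrix.mul_apply, Matrix.one_apply]

lemma mergeRetraction_mul_omitInclusion : mergeRetraction F a c * omitInclusion F a = 1 := by
  rw [mul_omitInclusion]
  ext i j
  simp [mergeRetraction, Matrix.one_apply]

lemma mergeEmbedding_injective : Function.Injective (mergeEmbedding F m a c) :=
  (leftInverse_blockConj mergeRetraction_mul_omitInclusion).injective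

lemma isSuperHom_mergeEmbedding : IsSuperHom (mergeEmbedding F m a c) :=
  isSuperHom_blockConj mergeRetraction_mul_omitInclusion

lemma mergeEmbedding_apply_row (Y : MJ F n m) (j : Fin (n + 1) ⊕ Fin m) :
    mergeEmbedding F m a c Y (Sum.inl a) j = 0 := by
  rcases j with j | j <;>
    simp [mergeEmbedding, blockConj, Matrix.mul_assoc, omitInclusion_mul_apply_self]

lemma mergeEmbedding_apply_col (Y : MJ F n m) (i : Fin (n + 1) ⊕ Fin m) :
    mergeEmbedding F m a c Y i (Sum.inl (a.succAbove c)) =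
      mergeEmbedding F m a c Y i (Sum.inl a) := by
  rcases i with i | i <;>
    simp [mergeEmbedding, blockConj, mul_mergeRetraction]

lemma mergeEmbedding_apply_succAbove (Y : MJ F n m) (i j : Fin n ⊕ Fin m) :
    mergeEmbedding F m a c Y (Sum.map a.succAbove id i) (Sum.map a.succAbove id j) = Y i j := by
  rcases i with i | i <;> rcases j with j | j <;>
    simp [mergeEmbedding, blockConj, mul_mergeRetraction, omitInclusion_mul_apply_succAbove,
      toBlocks₁₁, toBlocks₁₂, toBlocks₂₁, toBlocks₂₂]

lemma eq_inl_or_eq_map_succAbove (a : Fin (n + 1)) (i : Fin (n + 1) ⊕ Fin m) :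
    i = Sum.inl a ∨ ∃ i', i = Sum.map a.succAbove id i' := by
  rcases i with i | i
  · obtain rfl | ⟨i', rfl⟩ := a.eq_self_or_eq_succAbove i
    · exact .inl rfl
    · exact .inr ⟨.inl i', rfl⟩
  · exact .inr ⟨.inr i, rfl⟩

lemma mergeEmbedding_submatrix_eq_self {X : MJ F (n + 1) m} (hrow : ∀ j, X (Sum.inl a) j = 0)
    (hcol : ∀ i, X i (Sum.inl (a.succAbove c)) = X i (Sum.inl a)) :
    mergeEmbedding F m a c (X.submatrix (Sum.map a.succAbove id) (Sum.map a.succAbove id)) = X := by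
  ext i j
  obtain rfl | ⟨i, rfl⟩ := eq_inl_or_eq_map_succAbove a i
  · rw [mergeEmbedding_apply_row, hrow]
  obtain rfl | ⟨j, rfl⟩ := eq_inl_or_eq_map_succAbove a j
  · rw [← mergeEmbedding_apply_col, ← hcol]
    exact mergeEmbedding_apply_succAbove _ i (Sum.inl c)
  · exact mergeEmbedding_apply_succAbove _ i j

lemma mem_range_mergeEmbedding_iff {X : MJ F (n + 1) m} :
    X ∈ LinearMap.range (mergeEmbedding F m a c) ↔ (∀ j, X (Sum.inl a) j = 0) ∧
      ∀ i, X i (Sum.inl (a.succAbove c)) = X i (Sum.inl a) := by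
  constructor
  · rintro ⟨Y, rfl⟩
    exact ⟨mergeEmbedding_apply_row Y, mergeEmbedding_apply_col Y⟩
  · rintro ⟨hrow, hcol⟩
    exact ⟨_, mergeEmbedding_submatrix_eq_self hrow hcol⟩

lemma ospSub_sup_range_mergeEmbedding_eq_top {q : ℕ} :
    ospSub F (n + 1) q ⊔ LinearMap.range (mergeEmbedding F (2 * q) a c) = ⊤ := by
  refine eq_top_iff.2 fun X _ => ?_
  obtain ⟨Z, hZ, hrow, hsub⟩ :=
    exists_mem_ospSub_row_eq_col_sub_col_eq (a.succAbove_ne c).symm X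
  refine Submodule.mem_sup.2 ⟨Z, hZ, X - Z, ?_, add_sub_cancel Z X⟩
  refine mem_range_mergeEmbedding_iff.2 ⟨fun j => ?_, fun i => ?_⟩
  · rw [Matrix.sub_apply, hrow, sub_self]
  · rw [Matrix.sub_apply, Matrix.sub_apply, sub_eq_sub_iff_sub_eq_sub, hsub]

end MergeEmbedding

theorem osp_plus_Mn1m_decomposition_general
    (F : Type*) [Field F] [NeZero (2 : F)]
    (n q : ℕ) (hn : 2 ≤ n) :
    ∃ B : Submodule F (MJ F n (2 * q)),
      (B : Set (MJ F n (2 * q))) =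
        {X | (∀ j, X (Sum.inl ⟨n - 1, by omega⟩) j = 0) ∧
          ∀ i, i ≠ Sum.inl ⟨n - 1, by omega⟩ →
            X i (Sum.inl ⟨n - 2, by omega⟩) = X i (Sum.inl ⟨n - 1, by omega⟩)} ∧
      IsSubalg F (ospSub F n q) ∧ IsSubalg F B ∧
      SuperIso F B (⊤ : Submodule F (MJ F (n - 1) (2 * q))) ∧
      ospSub F n q ⊔ B = ⊤ := by
  obtain ⟨k, rfl⟩ := Nat.exists_eq_add_of_le' hn
  let B := LinearMap.range (mergeEmbedding F (2 * q) (Fin.last (k + 1)) (Fin.last k))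
  refine ⟨B, ?_, isSubalg_ospSub, isSuperHom_mergeEmbedding.isSubalg_range,
    isSuperHom_mergeEmbedding.superIso_range_top mergeEmbedding_injective,
    ospSub_sup_range_mergeEmbedding_eq_top⟩
  ext X
  rw [SetLike.mem_coe, mem_range_mergeEmbedding_iff, Fin.succAbove_last]
  refine and_congr_right fun hrow => ⟨fun hcol i _ => hcol i, fun hcol i => ?_⟩
  by_cases hi : i = Sum.inl (Fin.last (k + 1))
  · rw [hi, hrow, hrow]
  · exact hcol i hi

/-- for `n ≥ 2` and even `m = 2q`, inside `M_{n,2q}(F)^{(+)}` the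
subsuperalgebra `A = osp(n,q)` together with the set `B` of matrices whose `n`-th row is
zero and whose entries in columns `n−1` and `n` agree (off the `n`-th row) gives a
decomposition: `B` is a subsuperalgebra isomorphic to `M_{n−1,m}(F)^{(+)}` and
`A + B = M_{n,m}(F)^{(+)}`. -/
theorem osp_plus_Mn1m_decomposition
    (F : Type*) [Field F] [CharZero F]
    (n q : ℕ) (hn : 2 ≤ n) (hq : 1 ≤ q) :
    ∃ B : Submodule F (MJ F n (2 * q)),
      (B : Set (MJ F n (2 * q))) =
        {X | (∀ j, X (Sum.inl ⟨n - 1, by omega⟩) j = 0) ∧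
          ∀ i, i ≠ Sum.inl ⟨n - 1, by omega⟩ →
            X i (Sum.inl ⟨n - 2, by omega⟩) = X i (Sum.inl ⟨n - 1, by omega⟩)} ∧
      IsSubalg F (ospSub F n q) ∧ IsSubalg F B ∧
      SuperIso F B (⊤ : Submodule F (MJ F (n - 1) (2 * q))) ∧
      ospSub F n q ⊔ B = ⊤ := by
  exact osp_plus_Mn1m_decomposition_general F n q hn

end SJ
end

section
/- Let F be an algebraically closed field of characteristic zero and t ∈ F with t ≠ 0. Then the superalgebra D_t cannot be written as A + B for two proper nontrivial simple subsuperalgebras A and B. -/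
open Matrix

namespace SJ

section Dt

variable (F : Type*) [Field F]

/-- The superalgebra `D_t = (Fe₁ ⊕ Fe₂) ⊕ (Fx ⊕ Fy)`, realized on `F × F × F × F` with
`e₁ = (1,0,0,0)`, `e₂ = (0,1,0,0)`, `x = (0,0,1,0)`, `y = (0,0,0,1)`.  The product is the
bilinear extension of `eᵢ∘eᵢ = eᵢ`, `e₁∘e₂ = 0`, `eᵢ∘x = x∘eᵢ = x/2`,
`eᵢ∘y = y∘eᵢ = y/2`, `x∘y = −(y∘x) = e₁ + t·e₂`, `x∘x = y∘y = 0`. -/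
def dmul (t : F) (u v : F × F × F × F) : F × F × F × F :=
  (u.1 * v.1 + (u.2.2.1 * v.2.2.2 - u.2.2.2 * v.2.2.1),
   u.2.1 * v.2.1 + t * (u.2.2.1 * v.2.2.2 - u.2.2.2 * v.2.2.1),
   ((u.1 + u.2.1) * v.2.2.1 + (v.1 + v.2.1) * u.2.2.1) / 2,
   ((u.1 + u.2.1) * v.2.2.2 + (v.1 + v.2.1) * u.2.2.2) / 2)

/-- The even part `Fe₁ ⊕ Fe₂` of `D_t`. -/
def dtEven : Submodule F (F × F × F × F) where
  carrier := {u | u.2.2.1 = 0 ∧ u.2.2.2 = 0}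
  zero_mem' := ⟨rfl, rfl⟩
  add_mem' := by
    rintro ⟨a, b, c, d⟩ ⟨a', b', c', d'⟩ ⟨h1, h2⟩ ⟨g1, g2⟩
    constructor <;> simp_all
  smul_mem' := by
    rintro t ⟨a, b, c, d⟩ ⟨h1, h2⟩
    constructor <;> simp_all

/-- The odd part `Fx ⊕ Fy` of `D_t`. -/
def dtOdd : Submodule F (F × F × F × F) where
  carrier := {u | u.1 = 0 ∧ u.2.1 = 0}
  zero_mem' := ⟨rfl, rfl⟩
  add_mem' := by
    rintro ⟨a, b, c, d⟩ ⟨a', b', c', d'⟩ ⟨h1, h2⟩ ⟨g1, g2⟩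
    constructor <;> simp_all
  smul_mem' := by
    rintro t ⟨a, b, c, d⟩ ⟨h1, h2⟩
    constructor <;> simp_all

/-!
If the product of any two odd elements of a nontrivial simple `A` vanished, `A ∩ J₁` would be a
nonzero ideal, hence all of `A`, and `A ∘ A` would be zero. In `D_t` two odd elements with nonzero
product form a basis of `Fx ⊕ Fy`, and their product is a nonzero multiple of `e₁ + t e₂`. So `A`
contains the hyperplane `F(e₁ + t e₂) ⊕ Fx ⊕ Fy`, and a proper `A` equals it. Two proper nontrivial
simple subsuperalgebras therefore coincide, and cannot sum to `D_t`.
-/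

section OddPart

variable {F} {J : Type*} [AddCommGroup J] [Module F J] {ev od A : Submodule F J}

theorem isGradedG_inf_odd : IsGradedG ev od (A ⊓ od) :=
  le_antisymm (le_sup_of_le_right (le_inf le_rfl inf_le_right)) (sup_le inf_le_left inf_le_left)

theorem exists_odd_mul_ne_zero {mul : J → J → J}
    (add_mul : ∀ a b v, mul (a + b) v = mul a v + mul b v)
    (ev_mul_od : ∀ a ∈ ev, ∀ v ∈ od, mul a v ∈ od)
    (hA : IsSubalgG mul ev od A) (hnontriv : NontrivG od A) (hsimple : IsSimpleG mul ev od A) :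
    ∃ v ∈ A ⊓ od, ∃ w ∈ A ⊓ od, mul v w ≠ 0 := by
  by_contra! hzero
  obtain ⟨hgraded, hclosed⟩ := hA
  obtain ⟨⟨p, hp, q, hq, hpq⟩, hideal⟩ := hsimple
  have odd_ideal : ∀ u ∈ A, ∀ v ∈ A ⊓ od, mul u v ∈ A ⊓ od := by
    intro u hu v hv
    refine ⟨hclosed u hu v hv.1, ?_⟩
    rw [hgraded] at hu
    obtain ⟨a, ha, b, hb, rfl⟩ := Submodule.mem_sup.1 hu
    rw [add_mul, hzero b hb v hv, add_zero]
    exact ev_mul_od a ha.2 v hv.2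
  obtain hbot | hodd := hideal _ inf_le_left isGradedG_inf_odd odd_ideal
  · exact hnontriv hbot
  · rw [← hodd] at hp hq
    exact hpq (hzero p hp q hq)

end OddPart

section Hyperplane

variable {F} {t : F} {A : Submodule F (F × F × F × F)} {u v w : F × F × F × F}

theorem dmul_add_left (a b v : F × F × F × F) :
    dmul F t (a + b) v = dmul F t a v + dmul F t b v := by
  ext <;> simp only [dmul, Prod.fst_add, Prod.snd_add] <;> ring

theorem dmul_even_odd_mem (hu : u ∈ dtEven F) (hv : v ∈ dtOdd F) : dmul F t u v ∈ dtOdd F := by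
  obtain ⟨hu₁, hu₂⟩ := hu
  obtain ⟨hv₁, hv₂⟩ := hv
  constructor <;> simp [dmul, hu₁, hu₂, hv₁, hv₂]

/-- The determinant of the odd components of `u` and `v` in the basis `x`, `y`: the alternating
form that governs the product of two odd elements of `D_t`. -/
def oddDet (u v : F × F × F × F) : F :=
  u.2.2.1 * v.2.2.2 - u.2.2.2 * v.2.2.1

theorem dmul_odd_odd (hv : v ∈ dtOdd F) (hw : w ∈ dtOdd F) :
    dmul F t v w = oddDet v w • (1, t, 0, 0) := by
  obtain ⟨hv₁, hv₂⟩ := hv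
  obtain ⟨hw₁, hw₂⟩ := hw
  ext <;> simp [dmul, oddDet, hv₁, hv₂, hw₁, hw₂, mul_comm]

theorem oddDet_smul_cramer (hu : u ∈ dtOdd F) (hv : v ∈ dtOdd F) (hw : w ∈ dtOdd F) :
    oddDet v w • u = oddDet u w • v + oddDet v u • w := by
  obtain ⟨hu₁, hu₂⟩ := hu
  obtain ⟨hv₁, hv₂⟩ := hv
  obtain ⟨hw₁, hw₂⟩ := hw
  ext <;> simp only [oddDet, Prod.smul_fst, Prod.smul_snd, Prod.fst_add, Prod.snd_add, smul_eq_mul,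
    hu₁, hu₂, hv₁, hv₂, hw₁, hw₂] <;> ring

theorem dtOdd_le_of_oddDet_ne_zero (hv : v ∈ A ⊓ dtOdd F) (hw : w ∈ A ⊓ dtOdd F)
    (hdet : oddDet v w ≠ 0) : dtOdd F ≤ A := by
  intro u hu
  rw [← A.smul_mem_iff hdet, oddDet_smul_cramer hu hv.2 hw.2]
  exact A.add_mem (A.smul_mem _ hv.1) (A.smul_mem _ hw.1)

/-- The linear form on `D_t` whose value at `a e₁ + b e₂ + c x + d y` is `b - t a`. It cuts out
`dtHyperplane t`. -/
def dtForm (t : F) : F × F × F × F →ₗ[F] F :=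
  LinearMap.fst F F (F × F) ∘ₗ LinearMap.snd F F (F × F × F) - t • LinearMap.fst F F (F × F × F)

theorem dtForm_apply (t : F) (u : F × F × F × F) : dtForm t u = u.2.1 - t * u.1 := rfl

/-- The hyperplane `F(e₁ + t e₂) ⊕ Fx ⊕ Fy` of `D_t`, the only candidate for a proper nontrivial
simple subsuperalgebra. It is encoded as the kernel of `dtForm t`. -/
def dtHyperplane (t : F) : Submodule F (F × F × F × F) :=
  LinearMap.ker (dtForm t)

theorem isCoatom_dtHyperplane (t : F) : IsCoatom (dtHyperplane t) :=
  LinearMap.isCoatom_ker_of_surjective fun b ↦ ⟨(0, b, 0, 0), by simp [dtForm_apply]⟩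

theorem dtHyperplane_le (hprod : (1, t, 0, 0) ∈ A) (hodd : dtOdd F ≤ A) : dtHyperplane t ≤ A := by
  intro u hu
  have hu₂ : u.2.1 = t * u.1 := sub_eq_zero.1 hu
  have hdecomp : u = u.1 • (1, t, 0, 0) + (0, 0, u.2.2) := by
    ext <;> simp [hu₂, mul_comm]
  rw [hdecomp]
  exact A.add_mem (A.smul_mem _ hprod) (hodd ⟨rfl, rfl⟩)

theorem eq_dtHyperplane_of_isSimpleG (hA : IsSubalgG (dmul F t) (dtEven F) (dtOdd F) A)
    (hproper : A ≠ ⊤) (hnontriv : NontrivG (dtOdd F) A)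
    (hsimple : IsSimpleG (dmul F t) (dtEven F) (dtOdd F) A) : A = dtHyperplane t := by
  obtain ⟨v, hv, w, hw, hvw⟩ := exists_odd_mul_ne_zero dmul_add_left
    (fun _ ha _ hv ↦ dmul_even_odd_mem ha hv) hA hnontriv hsimple
  rw [dmul_odd_odd hv.2 hw.2] at hvw
  have hdet : oddDet v w ≠ 0 := left_ne_zero_of_smul hvw
  have hprod : (1, t, 0, 0) ∈ A := by
    rw [← A.smul_mem_iff hdet, ← dmul_odd_odd hv.2 hw.2]
    exact hA.2 v hv.1 w hw.1
  have hle : dtHyperplane t ≤ A :=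
    dtHyperplane_le hprod (dtOdd_le_of_oddDet_ne_zero hv hw hdet)
  exact ((isCoatom_dtHyperplane t).le_iff.1 hle).resolve_left hproper

end Hyperplane

/-- In characteristic two `dmul` reads the coefficient `1 / 2` as `0`; the argument is the same
for any other value of that coefficient. -/
theorem no_simple_decomposition_Dt_general (F : Type*) [Field F] (t : F) :
    ¬ ∃ A B : Submodule F (F × F × F × F),
        IsSubalgG (dmul F t) (dtEven F) (dtOdd F) A ∧
        IsSubalgG (dmul F t) (dtEven F) (dtOdd F) B ∧
        A ≠ ⊤ ∧ B ≠ ⊤ ∧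
        NontrivG (dtOdd F) A ∧ NontrivG (dtOdd F) B ∧
        IsSimpleG (dmul F t) (dtEven F) (dtOdd F) A ∧
        IsSimpleG (dmul F t) (dtEven F) (dtOdd F) B ∧
        A ⊔ B = ⊤ := by
  rintro ⟨A, B, hA, hB, hAtop, hBtop, hAnontriv, hBnontriv, hAsimple, hBsimple, hsup⟩
  have hAB : A = B :=
    (eq_dtHyperplane_of_isSimpleG hA hAtop hAnontriv hAsimple).trans
      (eq_dtHyperplane_of_isSimpleG hB hBtop hBnontriv hBsimple).symm
  rw [hAB, sup_idem] at hsup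
  exact hBtop hsup

/-- over an algebraically closed field of characteristic zero, for `t ≠ 0`
the superalgebra `D_t` cannot be written as `A + B` for two proper nontrivial simple
subsuperalgebras `A` and `B`. -/
theorem no_simple_decomposition_Dt
    (F : Type*) [Field F] [IsAlgClosed F] [CharZero F] (t : F) (ht : t ≠ 0) :
    ¬ ∃ A B : Submodule F (F × F × F × F),
        IsSubalgG (dmul F t) (dtEven F) (dtOdd F) A ∧
        IsSubalgG (dmul F t) (dtEven F) (dtOdd F) B ∧
        A ≠ ⊤ ∧ B ≠ ⊤ ∧
        NontrivG (dtOdd F) A ∧ NontrivG (dtOdd F) B ∧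
        IsSimpleG (dmul F t) (dtEven F) (dtOdd F) A ∧
        IsSimpleG (dmul F t) (dtEven F) (dtOdd F) B ∧
        A ⊔ B = ⊤ := by
  exact no_simple_decomposition_Dt_general F t

end Dt

end SJ
end

section
/- Let A be a finite-dimensional associative algebra over a field F of characteristic zero, let e ∈ A be an idempotent (e·e = e), let c ∈ F be nonzero, and suppose there exist x, y ∈ A with x·y − y·x = c·e. Then e = 0. -/
/-!
Since `c • e` is a commutator, left multiplication by `e` has trace zero. It is also an idempotent
endomorphism, so its trace is the rank of its image, which in characteristic zero vanishes only if
the image is trivial; but the image contains `e * e = e`.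
-/

section

open LinearMap

variable {R A : Type*} [CommRing R] [NonUnitalRing A] [Module R A] [SMulCommClass R A A]

theorem trace_mulLeft_commutator (x y : A) : trace R A (mulLeft R (x * y - y * x)) = 0 := by
  have hcomm : mulLeft R (x * y - y * x) = ⁅mulLeft R x, mulLeft R y⁆ := by
    ext a
    simp [Ring.lie_def, sub_mul, mul_assoc]
  rw [hcomm, trace_lie]

variable [IsDomain R] [IsPrincipalIdealRing R] [CharZero R] [Module.Free R A] [Module.Finite R A]

theorem eq_zero_of_isIdempotentElem_of_trace_mulLeft_eq_zero {e : A} (he : IsIdempotentElem e)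
    (htrace : trace R A (mulLeft R e) = 0) : e = 0 := by
  have hidem : IsIdempotentElem (mulLeft R e) := by
    rw [IsIdempotentElem, Module.End.mul_eq_comp, ← mulLeft_mul, he.eq]
  calc
    e = mulLeft R e e := he.eq.symm
    _ = 0 := by rw [hidem.eq_zero_of_trace_eq_zero htrace, LinearMap.zero_apply]

theorem idempotent_eq_zero_of_commutator_general [IsScalarTower R A A] {e : A}
    (he : IsIdempotentElem e) {c : R} (hc : c ≠ 0) {x y : A}
    (h : x * y - y * x = c • e) : e = 0 := by
  have htrace : c * trace R A (mulLeft R e) = 0 := calc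
    c * trace R A (mulLeft R e) = trace R A (mulLeft R (c • e)) :=
      (map_smul (trace R A ∘ₗ LinearMap.mul R A) c e).symm
    _ = 0 := by rw [← h, trace_mulLeft_commutator]
  exact eq_zero_of_isIdempotentElem_of_trace_mulLeft_eq_zero he
    ((mul_eq_zero.mp htrace).resolve_left hc)

end

/-- in a finite-dimensional associative (not necessarily unital) algebra
over a field of characteristic zero, an idempotent which is a nonzero scalar multiple of
a commutator `x·y − y·x` must be zero. -/
theorem idempotent_eq_zero_of_commutator
    (F : Type*) [Field F] [CharZero F]
    (A : Type*) [NonUnitalRing A] [Module F A]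
    [SMulCommClass F A A] [IsScalarTower F A A] [FiniteDimensional F A]
    (e : A) (he : e * e = e) (c : F) (hc : c ≠ 0)
    (x y : A) (h : x * y - y * x = c • e) : e = 0 :=
  idempotent_eq_zero_of_commutator_general he hc h
end

section
/- Let F be an algebraically closed field of characteristic zero and let 1 ≤ m < n. Suppose φ is an injective F-linear map from the space of symmetric m×m matrices over F into the space of symmetric n×n matrices over F such that φ(I_m) = I_n and φ(XY + YX) = φ(X)φ(Y) + φ(Y)φ(X) for all symmetric m×m matrices X, Y. Then 2m ≤ n. -/
open Matrix

namespace HFn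

variable (F : Type*) [Field F]

/-- `H(F_k)`: the space of symmetric `k×k` matrices over `F`. -/
def symSub (k : ℕ) : Submodule F (Matrix (Fin k) (Fin k) F) where
  carrier := {X | Xᵀ = X}
  zero_mem' := Matrix.transpose_zero
  add_mem' := by
    intro a b (ha : aᵀ = a) (hb : bᵀ = b)
    show (a + b)ᵀ = a + b
    rw [Matrix.transpose_add, ha, hb]
  smul_mem' := by
    intro c a (ha : aᵀ = a)
    show (c • a)ᵀ = c • a
    rw [Matrix.transpose_smul, ha]

/-!
A linear map `φ` preserving `XY + YX` turns the diagonal matrix units `Eᵢᵢ` into orthogonal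
idempotents `pᵢ`, and `bᵢⱼ = φ(Eᵢⱼ + Eⱼᵢ)` satisfies `bᵢⱼ pᵢ = pⱼ bᵢⱼ` and `bᵢⱼ² = pᵢ + pⱼ`, so
`pⱼ = bᵢⱼ pᵢ bᵢⱼ`. Hence all `pᵢ` have the same rank `r`, and since they are orthogonal with sum
`φ(1)`, the rank of `φ(1)` is `m * r`. If `φ(1) = 1` this says that `m` divides `n`, and a multiple
of `m` exceeding `m` is at least `2 * m`.
-/

section OrthogonalIdempotents

lemma range_add_of_isIdempotentElem {R V : Type*} [Semiring R] [AddCommMonoid V] [Module R V]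
    {f g : Module.End R V} (hf : IsIdempotentElem f) (hg : IsIdempotentElem g) (hfg : f * g = 0)
    (hgf : g * f = 0) : (f + g).range = f.range ⊔ g.range := by
  have hf_eq : (f + g) * f = f := by rw [add_mul, hf.eq, hgf, add_zero]
  have hg_eq : (f + g) * g = g := by rw [add_mul, hg.eq, hfg, zero_add]
  refine le_antisymm (LinearMap.range_add_le f g) (sup_le ?_ ?_)
  · simpa only [← Module.End.mul_eq_comp, hf_eq] using LinearMap.range_comp_le_range f (f + g)
  · simpa only [← Module.End.mul_eq_comp, hg_eq] using LinearMap.range_comp_le_range g (f + g)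

lemma disjoint_range_of_isIdempotentElem {R V : Type*} [Ring R] [AddCommGroup V] [Module R V]
    {f g : Module.End R V} (hf : IsIdempotentElem f) (hfg : f * g = 0) :
    Disjoint f.range g.range :=
  (LinearMap.IsIdempotentElem.isCompl hf).disjoint.mono_right (LinearMap.range_le_ker_iff.mpr hfg)

variable {K ι κ : Type*} [Field K] [Fintype κ]

lemma rank_add_of_isIdempotentElem {p q : Matrix κ κ K} (hp : IsIdempotentElem p)
    (hq : IsIdempotentElem q) (hpq : p * q = 0) (hqp : q * p = 0) :
    (p + q).rank = p.rank + q.rank := by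
  have mulVecLin_mul_eq {a b c : Matrix κ κ K} (h : a * b = c) :
      a.mulVecLin * b.mulVecLin = c.mulVecLin := by
    rw [← h, mulVecLin_mul, Module.End.mul_eq_comp]
  have hp' : IsIdempotentElem p.mulVecLin := mulVecLin_mul_eq hp
  have hpq' : p.mulVecLin * q.mulVecLin = 0 := by rw [mulVecLin_mul_eq hpq, mulVecLin_zero]
  have hqp' : q.mulVecLin * p.mulVecLin = 0 := by rw [mulVecLin_mul_eq hqp, mulVecLin_zero]
  have hrange : (p + q).mulVecLin.range = p.mulVecLin.range ⊔ q.mulVecLin.range := by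
    rw [mulVecLin_add, range_add_of_isIdempotentElem hp' (mulVecLin_mul_eq hq) hpq' hqp']
  have hdisjoint : p.mulVecLin.range ⊓ q.mulVecLin.range = ⊥ :=
    (disjoint_range_of_isIdempotentElem hp' hpq').eq_bot
  have hfinrank :=
    Submodule.finrank_sup_add_finrank_inf_eq p.mulVecLin.range q.mulVecLin.range
  rwa [hdisjoint, finrank_bot, add_zero, ← hrange] at hfinrank

lemma rank_sum_of_orthogonalIdempotents [DecidableEq κ] {e : ι → Matrix κ κ K}
    (he : OrthogonalIdempotents e) (s : Finset ι) :
    (∑ i ∈ s, e i).rank = ∑ i ∈ s, (e i).rank := by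
  classical
  induction s using Finset.induction_on with
  | empty => simp
  | insert i s hi ih =>
    have hsum_mul : (∑ j ∈ s, e j) * e i = 0 := by
      rw [Finset.sum_mul]
      exact Finset.sum_eq_zero fun j hj ↦ he.ortho (ne_of_mem_of_not_mem hj hi)
    rw [Finset.sum_insert hi, Finset.sum_insert hi, ← ih]
    exact rank_add_of_isIdempotentElem (he.idem i) he.isIdempotentElem_sum
      (he.mul_sum_of_notMem hi) hsum_mul

end OrthogonalIdempotents

section PeirceRelations

variable {R : Type*} {p q b : R}

lemma mul_eq_mul_of_anticommutator_eq_self [NonUnitalSemiring R] (hqp : q * p = 0)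
    (hp : p * b + b * p = b) (hq : q * b + b * q = b) : b * p = q * b :=
  calc
    b * p = (q * b + b * q) * p := by rw [hq]
    _ = q * b * p := by rw [add_mul, mul_assoc b, hqp, mul_zero, add_zero]
    _ = q * (p * b + b * p) := by rw [mul_add, ← mul_assoc, hqp, zero_mul, zero_add, mul_assoc]
    _ = q * b := by rw [hp]

lemma commute_of_anticommutator_eq_zero [NonUnitalRing R] (hp : IsIdempotentElem p)
    (hpb : p * b + b * p = 0) : Commute p b := by
  have hanti : p * b = -(b * p) := eq_neg_of_add_eq_zero_left hpb
  calc
    p * b = p * (p * b) := by rw [← mul_assoc, hp.eq]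
    _ = -(p * b) * p := by rw [neg_mul, mul_assoc, ← mul_neg, ← hanti]
    _ = b * p := by rw [hanti, neg_neg, mul_assoc, hp.eq]

end PeirceRelations

section JordanMap

variable {F} {A : Type*} [Ring A] [Algebra F A] {m : ℕ}

/-- A linear map from `H(F_m)` to an associative algebra that preserves the anticommutator
`XY + YX`, i.e. twice the Jordan product. As `H(F_m)` carries no multiplication here, the
anticommutator of `X` and `Y` is represented by any `Z` whose underlying matrix is `XY + YX`. -/
def IsJordanMap (φ : symSub F m →ₗ[F] A) : Prop :=
  ∀ X Y Z : symSub F m, (Z : Matrix (Fin m) (Fin m) F) = (X : Matrix (Fin m) (Fin m) F) * Y +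
    (Y : Matrix (Fin m) (Fin m) F) * X → φ Z = φ X * φ Y + φ Y * φ X

variable (F) in
/-- The diagonal matrix unit `Eᵢᵢ` as an element of `H(F_m)`. -/
def diagUnit (i : Fin m) : symSub F m :=
  ⟨single i i 1, transpose_single i i 1⟩

variable (F) in
/-- The symmetrized matrix unit `Eᵢⱼ + Eⱼᵢ` of `H(F_m)`; for `i = j` it is `2 Eᵢᵢ`. -/
def symUnit (i j : Fin m) : symSub F m :=
  ⟨single i j 1 + single j i 1, by
    change (single i j 1 + single j i 1 : Matrix (Fin m) (Fin m) F)ᵀ = _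
    rw [transpose_add, transpose_single, transpose_single, add_comm]⟩

lemma sum_diagUnit : ∑ i, diagUnit F i = (⟨1, transpose_one⟩ : symSub F m) := by
  apply Subtype.ext
  rw [Submodule.coe_sum]
  exact sum_single_one

namespace IsJordanMap

variable {φ : symSub F m →ₗ[F] A}

lemma map_diagUnit_mul_add_map_symUnit_mul (hφ : IsJordanMap φ) {i j : Fin m} (hij : i ≠ j) :
    φ (diagUnit F i) * φ (symUnit F i j) + φ (symUnit F i j) * φ (diagUnit F i) =
      φ (symUnit F i j) :=
  (hφ _ _ _ (by simp [diagUnit, symUnit, hij, hij.symm, mul_add, add_mul])).symm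

variable [NeZero (2 : F)]

lemma map_sq (hφ : IsJordanMap φ) {X Z : symSub F m}
    (hZ : (Z : Matrix (Fin m) (Fin m) F) = X * X) : φ Z = φ X * φ X := by
  have htwo : φ ((2 : F) • Z) = φ X * φ X + φ X * φ X :=
    hφ X X _ (by rw [Submodule.coe_smul, hZ, two_smul])
  rw [map_smul, ← two_smul F (φ X * φ X)] at htwo
  exact smul_right_injective A two_ne_zero htwo

lemma isIdempotentElem_map_diagUnit (hφ : IsJordanMap φ) (i : Fin m) :
    IsIdempotentElem (φ (diagUnit F i)) :=
  (hφ.map_sq (by simp [diagUnit])).symm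

lemma orthogonalIdempotents_map_diagUnit (hφ : IsJordanMap φ) :
    OrthogonalIdempotents fun i ↦ φ (diagUnit F i) where
  idem := hφ.isIdempotentElem_map_diagUnit
  ortho i j hij := by
    have hanti : φ (diagUnit F i) * φ (diagUnit F j) + φ (diagUnit F j) * φ (diagUnit F i) = 0 := by
      rw [← hφ _ _ 0 (by simp [diagUnit, hij, hij.symm]), map_zero]
    have hcomm : Commute (φ (diagUnit F i)) (φ (diagUnit F j)) :=
      commute_of_anticommutator_eq_zero (hφ.isIdempotentElem_map_diagUnit i) hanti
    rw [← hcomm.eq, ← two_smul F] at hanti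
    exact (smul_eq_zero_iff_right two_ne_zero).mp hanti

lemma map_symUnit_mul_self (hφ : IsJordanMap φ) {i j : Fin m} (hij : i ≠ j) :
    φ (symUnit F i j) * φ (symUnit F i j) = φ (diagUnit F i) + φ (diagUnit F j) := by
  rw [← map_add]
  exact (hφ.map_sq (by simp [diagUnit, symUnit, hij, hij.symm, mul_add, add_mul, add_comm])).symm

lemma map_diagUnit_eq_mul_mul (hφ : IsJordanMap φ) {i j : Fin m} (hij : i ≠ j) :
    φ (diagUnit F j) = φ (symUnit F i j) * φ (diagUnit F i) * φ (symUnit F i j) := by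
  have he := hφ.orthogonalIdempotents_map_diagUnit
  have hsymm : symUnit F j i = symUnit F i j := Subtype.ext (add_comm _ _)
  have hintertwine :
      φ (symUnit F i j) * φ (diagUnit F i) = φ (diagUnit F j) * φ (symUnit F i j) :=
    mul_eq_mul_of_anticommutator_eq_self (he.ortho hij.symm)
      (hφ.map_diagUnit_mul_add_map_symUnit_mul hij)
      (hsymm ▸ hφ.map_diagUnit_mul_add_map_symUnit_mul hij.symm)
  rw [hintertwine, mul_assoc, hφ.map_symUnit_mul_self hij, mul_add, he.ortho hij.symm, zero_add,
    (he.idem j).eq]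

variable {κ : Type*} [Fintype κ] [DecidableEq κ] {ψ : symSub F m →ₗ[F] Matrix κ κ F}

lemma rank_map_diagUnit_eq (hψ : IsJordanMap ψ) (i j : Fin m) :
    (ψ (diagUnit F i)).rank = (ψ (diagUnit F j)).rank := by
  have hle {i j : Fin m} (hij : i ≠ j) :
      (ψ (diagUnit F j)).rank ≤ (ψ (diagUnit F i)).rank := by
    rw [hψ.map_diagUnit_eq_mul_mul hij]
    exact (rank_mul_le_left _ _).trans (rank_mul_le_right _ _)
  rcases eq_or_ne i j with rfl | hij
  · rfl
  · exact le_antisymm (hle hij.symm) (hle hij)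

lemma rank_map_one (hψ : IsJordanMap ψ) (i : Fin m) :
    (ψ ⟨1, transpose_one⟩).rank = m * (ψ (diagUnit F i)).rank := by
  rw [← sum_diagUnit, map_sum,
    rank_sum_of_orthogonalIdempotents hψ.orthogonalIdempotents_map_diagUnit,
    Finset.sum_congr rfl fun j _ ↦ hψ.rank_map_diagUnit_eq j i, Finset.sum_const,
    Finset.card_univ, Fintype.card_fin, smul_eq_mul]

end IsJordanMap

end JordanMap

theorem unital_jordan_embedding_symmetric_matrices_general
    {F κ : Type*} [Field F] [NeZero (2 : F)] [Fintype κ] [DecidableEq κ] {m : ℕ}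
    {ψ : symSub F m →ₗ[F] Matrix κ κ F} (hψ : IsJordanMap ψ) :
    m ∣ (ψ ⟨1, transpose_one⟩).rank := by
  rcases isEmpty_or_nonempty (Fin m) with hempty | ⟨⟨i⟩⟩
  · rw [← sum_diagUnit, Finset.univ_eq_empty, Finset.sum_empty, map_zero, rank_zero]
    exact dvd_zero m
  · exact Dvd.intro _ (hψ.rank_map_one i).symm

/-- for `1 ≤ m < n`, a unital Jordan embedding of `H(F_m)` into `H(F_n)`
(an injective linear map sending `I` to `I` with `φ(XY+YX) = φ(X)φ(Y)+φ(Y)φ(X)`) forces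
`2m ≤ n`. -/
theorem unital_jordan_embedding_symmetric_matrices
    (F : Type*) [Field F] [IsAlgClosed F] [CharZero F]
    (m n : ℕ) (hm : 1 ≤ m) (hmn : m < n)
    (φ : symSub F m →ₗ[F] symSub F n)
    (hinj : Function.Injective φ)
    (hone : (φ ⟨1, Matrix.transpose_one⟩ : Matrix (Fin n) (Fin n) F) = 1)
    (hmul : ∀ X Y Z : symSub F m,
      (Z : Matrix (Fin m) (Fin m) F) = (X : Matrix (Fin m) (Fin m) F) * Y + (Y : Matrix (Fin m) (Fin m) F) * X →
      (φ Z : Matrix (Fin n) (Fin n) F) = (φ X : Matrix (Fin n) (Fin n) F) * φ Y + (φ Y : Matrix (Fin n) (Fin n) F) * φ X) :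
    2 * m ≤ n := by
  have hdvd : m ∣ n := by
    simpa [hone] using
      unital_jordan_embedding_symmetric_matrices_general (ψ := (symSub F n).subtype ∘ₗ φ) hmul
  have hle : m ≤ n - m := Nat.le_of_dvd (Nat.sub_pos_of_lt hmn) (Nat.dvd_sub hdvd dvd_rfl)
  omega

end HFn
end

section
/- Let F be an algebraically closed field of characteristic zero and let 1 ≤ m < n. Suppose φ is an injective F-linear map from the full matrix algebra M_m(F) into M_n(F) such that φ(I_m) = I_n and φ(XY + YX) = φ(X)φ(Y) + φ(Y)φ(X) for all X, Y ∈ M_m(F). Then 2m ≤ n. -/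
/-!
A Jordan homomorphism `φ` into a ring without `2`-torsion also preserves `x * x` and the triple
product `x * y * x`, and hence sends orthogonal idempotents to orthogonal idempotents. So the images
of the diagonal matrix units of `M_m` split the target space into `m` summands. For `i ≠ j` and
`u = Eᵢⱼ + Eⱼᵢ` we have `u * Eᵢᵢ * u = Eⱼⱼ`, so `φ Eⱼⱼ = φ u * φ Eᵢᵢ * φ u` has rank at most that
of `φ Eᵢᵢ`; by symmetry all summands have the same dimension. Therefore `m ∣ n`, and `m < n` forces
`2 * m ≤ n`.
-/

/-- A Jordan homomorphism: an additive map preserving the product `x * y + y * x`. Leaving out the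
factor `1 / 2` of the Jordan product lets the definition make sense over any ring. -/
structure IsJordanHom {A B : Type*} [NonUnitalNonAssocSemiring A] [NonUnitalNonAssocSemiring B]
    (φ : A →+ B) : Prop where
  map_mul_add_mul_swap : ∀ x y, φ (x * y + y * x) = φ x * φ y + φ y * φ x

namespace IsJordanHom

section NonUnital

variable {A B : Type*} [NonUnitalSemiring A] [NonUnitalRing B] {φ : A →+ B}

theorem map_mul_self (hφ : IsJordanHom φ) (hB : IsSMulRegular B (2 : ℕ)) (x : A) :
    φ (x * x) = φ x * φ x :=
  hB <| by simpa only [two_nsmul, map_add] using hφ.map_mul_add_mul_swap x x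

theorem map_mul_mul_self (hφ : IsJordanHom φ) (hB : IsSMulRegular B (2 : ℕ)) (x y : A) :
    φ (x * y * x) = φ x * φ y * φ x := by
  have expand : x * (x * y + y * x) + (x * y + y * x) * x
      = (x * x * y + y * (x * x)) + 2 • (x * y * x) := by
    simp only [mul_add, add_mul, mul_assoc, two_nsmul]
    abel
  have image := hφ.map_mul_add_mul_swap x (x * y + y * x)
  rw [expand, map_add, map_nsmul, hφ.map_mul_add_mul_swap, hφ.map_mul_add_mul_swap,
    hφ.map_mul_self hB] at image
  refine hB (add_left_cancel (image.trans ?_))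
  simp only [mul_add, add_mul, mul_assoc, two_nsmul]
  abel

theorem map_isIdempotentElem (hφ : IsJordanHom φ) (hB : IsSMulRegular B (2 : ℕ)) {e : A}
    (he : IsIdempotentElem e) : IsIdempotentElem (φ e) := by
  rw [IsIdempotentElem, ← hφ.map_mul_self hB, he.eq]

theorem map_mul_map_eq_zero (hφ : IsJordanHom φ) (hB : IsSMulRegular B (2 : ℕ)) {e x : A}
    (he : IsIdempotentElem e) (hex : e * x = 0) (hxe : x * e = 0) : φ e * φ x = 0 := by
  have anticommute : φ e * φ x + φ x * φ e = 0 := by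
    rw [← hφ.map_mul_add_mul_swap, hex, hxe, add_zero, map_zero]
  have triple : φ e * φ x * φ e = 0 := by
    rw [← hφ.map_mul_mul_self hB, hex, zero_mul, map_zero]
  calc φ e * φ x = φ e * φ e * φ x + φ e * φ x * φ e := by
        rw [triple, add_zero, (hφ.map_isIdempotentElem hB he).eq]
    _ = φ e * (φ e * φ x + φ x * φ e) := by rw [mul_add, mul_assoc, mul_assoc]
    _ = 0 := by rw [anticommute, mul_zero]

end NonUnital

variable {A B ι : Type*} [Semiring A] [Ring B] {φ : A →+ B} {e : ι → A}

theorem map_orthogonalIdempotents (hφ : IsJordanHom φ) (hB : IsSMulRegular B (2 : ℕ))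
    (he : OrthogonalIdempotents e) : OrthogonalIdempotents fun i => φ (e i) where
  idem i := hφ.map_isIdempotentElem hB (he.idem i)
  ortho _ _ hij := hφ.map_mul_map_eq_zero hB (he.idem _) (he.ortho hij) (he.ortho hij.symm)

theorem map_completeOrthogonalIdempotents [Fintype ι] (hφ : IsJordanHom φ)
    (hB : IsSMulRegular B (2 : ℕ)) (hone : φ 1 = 1) (he : CompleteOrthogonalIdempotents e) :
    CompleteOrthogonalIdempotents fun i => φ (e i) where
  toOrthogonalIdempotents := hφ.map_orthogonalIdempotents hB he.toOrthogonalIdempotents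
  complete := by rw [← map_sum, he.complete, hone]

end IsJordanHom

section LinearEndomorphisms

open Module

theorem bijective_pi_rangeRestrict {R V ι : Type*} [Semiring R] [AddCommMonoid V] [Module R V]
    [Fintype ι] {e : ι → End R V} (he : CompleteOrthogonalIdempotents e) :
    Function.Bijective (LinearMap.pi fun i => (e i).rangeRestrict) := by
  classical
  constructor
  · intro v w hvw
    have apply_eq (i : ι) : e i v = e i w := congrArg Subtype.val (congrFun hvw i)
    calc v = (∑ i, e i) v := by rw [he.complete, End.one_apply]
      _ = (∑ i, e i) w := by simp only [LinearMap.sum_apply, apply_eq]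
      _ = w := by rw [he.complete, End.one_apply]
  · intro w
    choose v hv using fun i => (w i).2
    refine ⟨∑ j, e j (v j), funext fun i => Subtype.ext ?_⟩
    calc e i (∑ j, e j (v j)) = ∑ j, (e i * e j) (v j) := map_sum _ _ _
      _ = e i (v i) := by simp [he.mul_eq, apply_ite DFunLike.coe, ite_apply]
      _ = w i := hv i

variable {K V : Type*} [DivisionRing K] [AddCommGroup V] [Module K V]

theorem isSMulRegular_two_end [NeZero (2 : K)] : IsSMulRegular (End K V) (2 : ℕ) := by
  intro f g hfg
  ext v
  refine smul_right_injective V (two_ne_zero (α := K)) ?_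
  simpa only [ofNat_smul_eq_nsmul, LinearMap.smul_apply] using LinearMap.congr_fun hfg v

variable [FiniteDimensional K V]

theorem finrank_eq_sum_finrank_range {ι : Type*} [Fintype ι] {e : ι → End K V}
    (he : CompleteOrthogonalIdempotents e) :
    finrank K V = ∑ i, finrank K (LinearMap.range (e i)) := by
  rw [(LinearEquiv.ofBijective _ (bijective_pi_rangeRestrict he)).finrank_eq, finrank_pi_fintype]

theorem finrank_range_mul_mul_le (f g h : End K V) :
    finrank K (LinearMap.range (f * g * h)) ≤ finrank K (LinearMap.range g) :=
  calc finrank K (LinearMap.range (f * g * h))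
      ≤ finrank K (LinearMap.range (f * g)) :=
        Submodule.finrank_mono (LinearMap.range_comp_le_range h (f * g))
    _ = finrank K ((LinearMap.range g).map f) := by rw [End.mul_eq_comp, LinearMap.range_comp]
    _ ≤ finrank K (LinearMap.range g) := Submodule.finrank_map_le f _

end LinearEndomorphisms

section MatrixUnits

variable {R ι : Type*} [Semiring R] [Fintype ι] [DecidableEq ι]

theorem completeOrthogonalIdempotents_single_diag :
    CompleteOrthogonalIdempotents fun i : ι => Matrix.single i i (1 : R) where
  idem i := by simp [IsIdempotentElem]
  ortho _ _ hij := by simp [hij]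
  complete := Matrix.sum_single_one

theorem exists_mul_single_diag_mul_eq (i j : ι) :
    ∃ u : Matrix ι ι R, u * Matrix.single i i 1 * u = Matrix.single j j 1 := by
  obtain rfl | hij := eq_or_ne i j
  · exact ⟨1, by simp⟩
  · exact ⟨Matrix.single i j 1 + Matrix.single j i 1, by simp [add_mul, mul_add, hij, hij.symm]⟩

end MatrixUnits

section JordanRepresentation

variable {R K V ι : Type*} [Semiring R] [DivisionRing K] [NeZero (2 : K)] [AddCommGroup V]
  [Module K V] [FiniteDimensional K V] [Fintype ι] [DecidableEq ι]
  {φ : Matrix ι ι R →+ Module.End K V}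

theorem IsJordanHom.finrank_range_map_single_diag_le (hφ : IsJordanHom φ) (i j : ι) :
    Module.finrank K (LinearMap.range (φ (Matrix.single j j 1)))
      ≤ Module.finrank K (LinearMap.range (φ (Matrix.single i i 1))) := by
  obtain ⟨u, hu⟩ := exists_mul_single_diag_mul_eq (R := R) i j
  rw [← hu, hφ.map_mul_mul_self isSMulRegular_two_end]
  exact finrank_range_mul_mul_le _ _ _

theorem unital_jordan_embedding_full_matrices_general (hφ : IsJordanHom φ) (hone : φ 1 = 1) :
    Fintype.card ι ∣ Module.finrank K V := by
  have finrank_eq_sum := finrank_eq_sum_finrank_range <|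
    hφ.map_completeOrthogonalIdempotents isSMulRegular_two_end hone
      completeOrthogonalIdempotents_single_diag
  obtain _ | ⟨⟨i⟩⟩ := isEmpty_or_nonempty ι
  · simp [finrank_eq_sum]
  · have finrank_range_eq (j : ι) := (hφ.finrank_range_map_single_diag_le i j).antisymm
      (hφ.finrank_range_map_single_diag_le j i)
    rw [finrank_eq_sum, Fintype.sum_congr _ _ finrank_range_eq, Finset.sum_const, Finset.card_univ,
      smul_eq_mul]
    exact dvd_mul_right _ _

end JordanRepresentation

/-- for `1 ≤ m < n`, a unital Jordan embedding of `M_m(F)^{(+)}` into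
`M_n(F)^{(+)}` (an injective linear map sending `I` to `I` with
`φ(XY+YX) = φ(X)φ(Y)+φ(Y)φ(X)`) forces `2m ≤ n`. -/
theorem unital_jordan_embedding_full_matrices
    (F : Type*) [Field F] [IsAlgClosed F] [CharZero F]
    (m n : ℕ) (hm : 1 ≤ m) (hmn : m < n)
    (φ : Matrix (Fin m) (Fin m) F →ₗ[F] Matrix (Fin n) (Fin n) F)
    (hinj : Function.Injective φ)
    (hone : φ 1 = 1)
    (hmul : ∀ X Y : Matrix (Fin m) (Fin m) F,
      φ (X * Y + Y * X) = φ X * φ Y + φ Y * φ X) :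
    2 * m ≤ n := by
  let ψ := (Matrix.toLinAlgEquiv' (R := F) (n := Fin n)).toLinearMap ∘ₗ φ
  have hψ : IsJordanHom ψ.toAddMonoidHom :=
    ⟨fun X Y => by simpa [ψ] using congrArg Matrix.toLinAlgEquiv' (hmul X Y)⟩
  have hdvd : m ∣ n := by
    simpa using unital_jordan_embedding_full_matrices_general hψ (by simp [ψ, hone])
  have : m ≤ n - m := Nat.le_of_dvd (Nat.sub_pos_of_lt hmn) (Nat.dvd_sub hdvd dvd_rfl)
  omega
end
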